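/- Type preservation of the CBV translation of the graded-monadic λ-calculus: if Γ ⊢_mon e : τ, then ⟦Γ⟧v ⊢ ⟦e⟧v :^⊥ F ⟦τ⟧v in CBPV with effects. -/

import Mathlib

set_option autoImplicit false

/-- A preordered monoid of effects `(E, ·, ⊥, ≤eff)`, with a distinguished `tock` effect. -/
structure EffSig (E : Type) where
  op : E → E → E
  bot : E
  tock : E
  le : E → E → Prop
  op_assoc : ∀ a b c, op (op a b) c = op a (op b c)
  bot_op : ∀ a, op bot a = a
  op_bot : ∀ a, op a bot = a
  le_refl : ∀ a, le a a
  le_trans : ∀ a b c, le a b → le b c → le a c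
  le_op : ∀ a b c d, le a b → le c d → le (op a c) (op b d)

namespace CBPVEff

mutual
/-- CBPV value types: `unit`, graded thunks `U_φ B`, positive products, sums. -/
inductive VTy (E : Type) : Type where
  | unit : VTy E
  | thunk : E → CTy E → VTy E
  | prod : VTy E → VTy E → VTy E
  | sum : VTy E → VTy E → VTy E
/-- CBPV computation types: functions, returners `F A`, negative products. -/
inductive CTy (E : Type) : Type where
  | arr : VTy E → CTy E → CTy E
  | F : VTy E → CTy E
  | wth : CTy E → CTy E → CTy E
end

mutual
/-- CBPV values (de Bruijn indices for variables). -/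
inductive Val : Type where
  | var : Nat → Val
  | unit : Val
  | thunk : Comp → Val
  | pair : Val → Val → Val
  | inl : Val → Val
  | inr : Val → Val
/-- CBPV computations. -/
inductive Comp : Type where
  | lam : Comp → Comp
  | app : Comp → Val → Comp
  | force : Val → Comp
  | split : Val → Comp → Comp
  | cpair : Comp → Comp → Comp
  | fst : Comp → Comp
  | snd : Comp → Comp
  | ret : Val → Comp
  | letin : Comp → Comp → Comp
  | seq : Val → Comp → Comp
  | case : Val → Comp → Comp → Comp
  | tick : Comp
end

mutual
/-- The value typing judgment `Γ ⊢ V : A` of the CBPV type-and-effect system. -/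
inductive VHasTy {E : Type} (S : EffSig E) : List (VTy E) → Val → VTy E → Prop where
  | var : ∀ {Γ : List (VTy E)} {x : Nat} {A : VTy E},
      Γ[x]? = some A → VHasTy S Γ (.var x) A
  | unit : ∀ {Γ : List (VTy E)}, VHasTy S Γ .unit .unit
  | thunk : ∀ {Γ : List (VTy E)} {M : Comp} {φ : E} {B : CTy E},
      CHasTy S Γ M φ B → VHasTy S Γ (.thunk M) (.thunk φ B)
  | pair : ∀ {Γ : List (VTy E)} {V₁ V₂ : Val} {A₁ A₂ : VTy E},
      VHasTy S Γ V₁ A₁ → VHasTy S Γ V₂ A₂ → VHasTy S Γ (.pair V₁ V₂) (.prod A₁ A₂)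
  | inl : ∀ {Γ : List (VTy E)} {V : Val} {A₁ A₂ : VTy E},
      VHasTy S Γ V A₁ → VHasTy S Γ (.inl V) (.sum A₁ A₂)
  | inr : ∀ {Γ : List (VTy E)} {V : Val} {A₁ A₂ : VTy E},
      VHasTy S Γ V A₂ → VHasTy S Γ (.inr V) (.sum A₁ A₂)

/-- The computation typing judgment `Γ ⊢ M :^φ B` of the CBPV type-and-effect system. -/
inductive CHasTy {E : Type} (S : EffSig E) : List (VTy E) → Comp → E → CTy E → Prop where
  | tick : ∀ {Γ : List (VTy E)} {φ : E}, S.le S.tock φ → CHasTy S Γ .tick φ (.F .unit)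
  | lam : ∀ {Γ : List (VTy E)} {A : VTy E} {M : Comp} {φ : E} {B : CTy E},
      CHasTy S (A :: Γ) M φ B → CHasTy S Γ (.lam M) φ (.arr A B)
  | app : ∀ {Γ : List (VTy E)} {M : Comp} {V : Val} {A : VTy E} {φ : E} {B : CTy E},
      CHasTy S Γ M φ (.arr A B) → VHasTy S Γ V A → CHasTy S Γ (.app M V) φ B
  | force : ∀ {Γ : List (VTy E)} {V : Val} {φ' φ : E} {B : CTy E},
      VHasTy S Γ V (.thunk φ' B) → S.le φ' φ → CHasTy S Γ (.force V) φ B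
  | ret : ∀ {Γ : List (VTy E)} {V : Val} {A : VTy E} {φ : E},
      VHasTy S Γ V A → S.le S.bot φ → CHasTy S Γ (.ret V) φ (.F A)
  | letin : ∀ {Γ : List (VTy E)} {M N : Comp} {A : VTy E} {φ₁ φ₂ φ : E} {B : CTy E},
      CHasTy S Γ M φ₁ (.F A) → CHasTy S (A :: Γ) N φ₂ B →
      S.le (S.op φ₁ φ₂) φ → CHasTy S Γ (.letin M N) φ B
  | split : ∀ {Γ : List (VTy E)} {V : Val} {A₁ A₂ : VTy E} {N : Comp} {φ : E} {B : CTy E},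
      VHasTy S Γ V (.prod A₁ A₂) → CHasTy S (A₂ :: A₁ :: Γ) N φ B →
      CHasTy S Γ (.split V N) φ B
  | cpair : ∀ {Γ : List (VTy E)} {M₁ M₂ : Comp} {φ : E} {B₁ B₂ : CTy E},
      CHasTy S Γ M₁ φ B₁ → CHasTy S Γ M₂ φ B₂ → CHasTy S Γ (.cpair M₁ M₂) φ (.wth B₁ B₂)
  | fst : ∀ {Γ : List (VTy E)} {M : Comp} {φ : E} {B₁ B₂ : CTy E},
      CHasTy S Γ M φ (.wth B₁ B₂) → CHasTy S Γ (.fst M) φ B₁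
  | snd : ∀ {Γ : List (VTy E)} {M : Comp} {φ : E} {B₁ B₂ : CTy E},
      CHasTy S Γ M φ (.wth B₁ B₂) → CHasTy S Γ (.snd M) φ B₂
  | seq : ∀ {Γ : List (VTy E)} {V : Val} {M : Comp} {φ : E} {B : CTy E},
      VHasTy S Γ V .unit → CHasTy S Γ M φ B → CHasTy S Γ (.seq V M) φ B
  | case : ∀ {Γ : List (VTy E)} {V : Val} {A₁ A₂ : VTy E} {M₁ M₂ : Comp} {φ : E} {B : CTy E},
      VHasTy S Γ V (.sum A₁ A₂) → CHasTy S (A₁ :: Γ) M₁ φ B →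
      CHasTy S (A₂ :: Γ) M₂ φ B → CHasTy S Γ (.case V M₁ M₂) φ B
end

/-- Lifting a de Bruijn renaming under one binder. -/
def liftRen (f : Nat → Nat) : Nat → Nat
  | 0 => 0
  | n + 1 => f n + 1

mutual
/-- Renaming of values. -/
def Val.rename : Val → (Nat → Nat) → Val
  | .var x, f => .var (f x)
  | .unit, _ => .unit
  | .thunk M, f => .thunk (M.rename f)
  | .pair V₁ V₂, f => .pair (V₁.rename f) (V₂.rename f)
  | .inl V, f => .inl (V.rename f)
  | .inr V, f => .inr (V.rename f)
/-- Renaming of computations. -/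
def Comp.rename : Comp → (Nat → Nat) → Comp
  | .lam M, f => .lam (M.rename (liftRen f))
  | .app M V, f => .app (M.rename f) (V.rename f)
  | .force V, f => .force (V.rename f)
  | .split V N, f => .split (V.rename f) (N.rename (liftRen (liftRen f)))
  | .cpair M₁ M₂, f => .cpair (M₁.rename f) (M₂.rename f)
  | .fst M, f => .fst (M.rename f)
  | .snd M, f => .snd (M.rename f)
  | .ret V, f => .ret (V.rename f)
  | .letin M N, f => .letin (M.rename f) (N.rename (liftRen f))
  | .seq V M, f => .seq (V.rename f) (M.rename f)
  | .case V M₁ M₂, f => .case (V.rename f) (M₁.rename (liftRen f)) (M₂.rename (liftRen f))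
  | .tick, _ => .tick
end

/-- Weakening: shift all free variables up by one. -/
def shift (M : Comp) : Comp := M.rename Nat.succ

/-- Weakening under one binder: shift all free variables except index 0 up by one. -/
def shift1 (M : Comp) : Comp := M.rename (liftRen Nat.succ)

/-- Weakening under two binders. -/
def shift2 (M : Comp) : Comp := M.rename (liftRen (liftRen Nat.succ))

end CBPVEff

namespace LamMon

/-- Types of the simply-typed λ-calculus with a graded monad `T_φ`. -/
inductive MTy (E : Type) : Type where
  | unit : MTy E
  | arr : MTy E → MTy E → MTy E
  | wth : MTy E → MTy E → MTy E
  | sum : MTy E → MTy E → MTy E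
  | T : E → MTy E → MTy E

/-- Terms of the graded-monadic λ-calculus (de Bruijn indices). -/
inductive MTm : Type where
  | var : Nat → MTm
  | lam : MTm → MTm
  | app : MTm → MTm → MTm
  | unit : MTm
  | seq : MTm → MTm → MTm
  | wpair : MTm → MTm → MTm
  | fst : MTm → MTm
  | snd : MTm → MTm
  | inl : MTm → MTm
  | inr : MTm → MTm
  | case : MTm → MTm → MTm → MTm
  | ret : MTm → MTm
  | bind : MTm → MTm → MTm
  | tick : MTm

/-- The typing judgment `Γ ⊢_mon e : τ`: a pure λ-calculus whose effects are
isolated inside the graded monadic type `T_φ`. -/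
inductive HasTy {E : Type} (S : EffSig E) : List (MTy E) → MTm → MTy E → Prop where
  | var : ∀ {Γ : List (MTy E)} {x : Nat} {τ : MTy E},
      Γ[x]? = some τ → HasTy S Γ (.var x) τ
  | lam : ∀ {Γ : List (MTy E)} {e : MTm} {τ₁ τ₂ : MTy E},
      HasTy S (τ₁ :: Γ) e τ₂ → HasTy S Γ (.lam e) (.arr τ₁ τ₂)
  | app : ∀ {Γ : List (MTy E)} {e₁ e₂ : MTm} {τ₁ τ₂ : MTy E},
      HasTy S Γ e₁ (.arr τ₁ τ₂) → HasTy S Γ e₂ τ₁ → HasTy S Γ (.app e₁ e₂) τ₂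
  | unit : ∀ {Γ : List (MTy E)}, HasTy S Γ .unit .unit
  | seq : ∀ {Γ : List (MTy E)} {e₁ e₂ : MTm} {τ : MTy E},
      HasTy S Γ e₁ .unit → HasTy S Γ e₂ τ → HasTy S Γ (.seq e₁ e₂) τ
  | wpair : ∀ {Γ : List (MTy E)} {e₁ e₂ : MTm} {τ₁ τ₂ : MTy E},
      HasTy S Γ e₁ τ₁ → HasTy S Γ e₂ τ₂ → HasTy S Γ (.wpair e₁ e₂) (.wth τ₁ τ₂)
  | fst : ∀ {Γ : List (MTy E)} {e : MTm} {τ₁ τ₂ : MTy E},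
      HasTy S Γ e (.wth τ₁ τ₂) → HasTy S Γ (.fst e) τ₁
  | snd : ∀ {Γ : List (MTy E)} {e : MTm} {τ₁ τ₂ : MTy E},
      HasTy S Γ e (.wth τ₁ τ₂) → HasTy S Γ (.snd e) τ₂
  | inl : ∀ {Γ : List (MTy E)} {e : MTm} {τ₁ τ₂ : MTy E},
      HasTy S Γ e τ₁ → HasTy S Γ (.inl e) (.sum τ₁ τ₂)
  | inr : ∀ {Γ : List (MTy E)} {e : MTm} {τ₁ τ₂ : MTy E},
      HasTy S Γ e τ₂ → HasTy S Γ (.inr e) (.sum τ₁ τ₂)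
  | case : ∀ {Γ : List (MTy E)} {e e₁ e₂ : MTm} {τ₁ τ₂ τ : MTy E},
      HasTy S Γ e (.sum τ₁ τ₂) → HasTy S (τ₁ :: Γ) e₁ τ →
      HasTy S (τ₂ :: Γ) e₂ τ → HasTy S Γ (.case e e₁ e₂) τ
  | ret : ∀ {Γ : List (MTy E)} {e : MTm} {τ : MTy E} {φ : E},
      HasTy S Γ e τ → S.le S.bot φ → HasTy S Γ (.ret e) (.T φ τ)
  | bind : ∀ {Γ : List (MTy E)} {e₁ e₂ : MTm} {τ₁ τ₂ : MTy E} {φ₁ φ₂ φ : E},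
      HasTy S Γ e₁ (.T φ₁ τ₁) → HasTy S (τ₁ :: Γ) e₂ (.T φ₂ τ₂) →
      S.le (S.op φ₁ φ₂) φ → HasTy S Γ (.bind e₁ e₂) (.T φ τ₂)
  | tick : ∀ {Γ : List (MTy E)} {φ : E}, S.le S.tock φ → HasTy S Γ .tick (.T φ .unit)

end LamMon

open CBPVEff LamMon

/-- CBV translation of graded-monadic source types into CBPV value types;
the graded monad is translated as `⟦T_φ τ⟧v = U_φ (F ⟦τ⟧v)`. -/
def tyTransV {E : Type} (S : EffSig E) : MTy E → VTy E
  | .unit => .unit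
  | .arr τ₁ τ₂ => .thunk S.bot (.arr (tyTransV S τ₁) (.F (tyTransV S τ₂)))
  | .wth τ₁ τ₂ => .thunk S.bot (.wth (.F (tyTransV S τ₁)) (.F (tyTransV S τ₂)))
  | .sum τ₁ τ₂ => .sum (tyTransV S τ₁) (tyTransV S τ₂)
  | .T φ τ => .thunk φ (.F (tyTransV S τ))

/-- Levy's CBV translation of source terms into CBPV computations, extended
with the graded monadic operations. -/
def tmTransV : MTm → Comp
  | .var x => .ret (.var x)
  | .lam e => .ret (.thunk (.lam (tmTransV e)))
  | .app e₁ e₂ =>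
      .letin (tmTransV e₁) (.letin (shift (tmTransV e₂)) (.app (.force (.var 1)) (.var 0)))
  | .unit => .ret .unit
  | .seq e₁ e₂ => .letin (tmTransV e₁) (.seq (.var 0) (shift (tmTransV e₂)))
  | .wpair e₁ e₂ => .ret (.thunk (.cpair (tmTransV e₁) (tmTransV e₂)))
  | .fst e => .letin (tmTransV e) (.fst (.force (.var 0)))
  | .snd e => .letin (tmTransV e) (.snd (.force (.var 0)))
  | .inl e => .letin (tmTransV e) (.ret (.inl (.var 0)))
  | .inr e => .letin (tmTransV e) (.ret (.inr (.var 0)))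
  | .case e e₁ e₂ =>
      .letin (tmTransV e) (.case (.var 0) (shift1 (tmTransV e₁)) (shift1 (tmTransV e₂)))
  | .ret e => .ret (.thunk (tmTransV e))
  | .bind e₁ e₂ =>
      .letin (tmTransV e₁) (.ret (.thunk (.letin (.force (.var 0))
        (.letin (shift1 (tmTransV e₂)) (.force (.var 0))))))
  | .tick => .ret (.thunk (.letin .tick (.ret (.var 0))))

/-- Well-typed renamings between contexts. -/
def RenOK {E : Type} (f : Nat → Nat) (Γ Δ : List (VTy E)) : Prop :=
  ∀ (x : Nat) (A : VTy E), Γ[x]? = some A → Δ[f x]? = some A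

theorem RenOK.lift {E : Type} {f : Nat → Nat} {Γ Δ : List (VTy E)} (h : RenOK f Γ Δ)
    (B : VTy E) : RenOK (liftRen f) (B :: Γ) (B :: Δ) := by
  intro x A hx
  cases x with
  | zero => simpa [liftRen] using hx
  | succ n =>
    simp only [liftRen, List.getElem?_cons_succ] at hx ⊢
    exact h n A hx

theorem RenOK.succ {E : Type} (Γ : List (VTy E)) (B : VTy E) :
    RenOK Nat.succ Γ (B :: Γ) := by
  intro x A hx
  simpa using hx

mutual
theorem vrename {E : Type} {S : EffSig E} :
    ∀ {V : Val} {Γ Δ : List (VTy E)} {A : VTy E} {f : Nat → Nat},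
      VHasTy S Γ V A → RenOK f Γ Δ → VHasTy S Δ (V.rename f) A
  | .var _, _, _, _, _, h, hf => by
    cases h with | var h => rw [Val.rename]; exact .var (hf _ _ h)
  | .unit, _, _, _, _, h, hf => by
    cases h; rw [Val.rename]; exact .unit
  | .thunk M, _, _, _, _, h, hf => by
    cases h with | thunk h => rw [Val.rename]; exact .thunk (crename h hf)
  | .pair V W, _, _, _, _, h, hf => by
    cases h with | pair h k => rw [Val.rename]; exact .pair (vrename h hf) (vrename k hf)
  | .inl V, _, _, _, _, h, hf => by
    cases h with | inl h => rw [Val.rename]; exact .inl (vrename h hf)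
  | .inr V, _, _, _, _, h, hf => by
    cases h with | inr h => rw [Val.rename]; exact .inr (vrename h hf)

theorem crename {E : Type} {S : EffSig E} :
    ∀ {M : Comp} {Γ Δ : List (VTy E)} {φ : E} {B : CTy E} {f : Nat → Nat},
      CHasTy S Γ M φ B → RenOK f Γ Δ → CHasTy S Δ (M.rename f) φ B
  | .lam M, _, _, _, _, _, h, hf => by
    cases h with | lam h => rw [Comp.rename]; exact .lam (crename h (hf.lift _))
  | .app M V, _, _, _, _, _, h, hf => by
    cases h with | app h k => rw [Comp.rename]; exact .app (crename h hf) (vrename k hf)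
  | .force V, _, _, _, _, _, h, hf => by
    cases h with | force h k => rw [Comp.rename]; exact .force (vrename h hf) k
  | .split V N, _, _, _, _, _, h, hf => by
    cases h with
    | split h k =>
      rw [Comp.rename]; exact .split (vrename h hf) (crename k ((hf.lift _).lift _))
  | .cpair M N, _, _, _, _, _, h, hf => by
    cases h with | cpair h k => rw [Comp.rename]; exact .cpair (crename h hf) (crename k hf)
  | .fst M, _, _, _, _, _, h, hf => by
    cases h with | fst h => rw [Comp.rename]; exact .fst (crename h hf)
  | .snd M, _, _, _, _, _, h, hf => by
    cases h with | snd h => rw [Comp.rename]; exact .snd (crename h hf)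
  | .ret V, _, _, _, _, _, h, hf => by
    cases h with | ret h k => rw [Comp.rename]; exact .ret (vrename h hf) k
  | .letin M N, _, _, _, _, _, h, hf => by
    cases h with
    | letin h k l => rw [Comp.rename]; exact .letin (crename h hf) (crename k (hf.lift _)) l
  | .seq V M, _, _, _, _, _, h, hf => by
    cases h with | seq h k => rw [Comp.rename]; exact .seq (vrename h hf) (crename k hf)
  | .case V M N, _, _, _, _, _, h, hf => by
    cases h with
    | case h k l =>
      rw [Comp.rename]
      exact .case (vrename h hf) (crename k (hf.lift _)) (crename l (hf.lift _))
  | .tick, _, _, _, _, _, h, hf => by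
    cases h with | tick h => rw [Comp.rename]; exact .tick h
end

/-- Effect subsumption is admissible. -/
theorem csub {E : Type} {S : EffSig E} :
    ∀ {M : Comp} {Γ : List (VTy E)} {φ ψ : E} {B : CTy E},
      CHasTy S Γ M φ B → S.le φ ψ → CHasTy S Γ M ψ B
  | .lam M, _, _, _, _, h, hf => by
    cases h with | lam h => exact .lam (csub h hf)
  | .app M V, _, _, _, _, h, hf => by
    cases h with | app h k => exact .app (csub h hf) k
  | .force V, _, _, _, _, h, hf => by
    cases h with | force h k => exact .force h (S.le_trans _ _ _ k hf)
  | .split V N, _, _, _, _, h, hf => by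
    cases h with | split h k => exact .split h (csub k hf)
  | .cpair M N, _, _, _, _, h, hf => by
    cases h with | cpair h k => exact .cpair (csub h hf) (csub k hf)
  | .fst M, _, _, _, _, h, hf => by
    cases h with | fst h => exact .fst (csub h hf)
  | .snd M, _, _, _, _, h, hf => by
    cases h with | snd h => exact .snd (csub h hf)
  | .ret V, _, _, _, _, h, hf => by
    cases h with | ret h k => exact .ret h (S.le_trans _ _ _ k hf)
  | .letin M N, _, _, _, _, h, hf => by
    cases h with | letin h k l => exact .letin h k (S.le_trans _ _ _ l hf)
  | .seq V M, _, _, _, _, h, hf => by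
    cases h with | seq h k => exact .seq h (csub k hf)
  | .case V M N, _, _, _, _, h, hf => by
    cases h with | case h k l => exact .case h (csub k hf) (csub l hf)
  | .tick, _, _, _, _, h, hf => by
    cases h with | tick h => exact .tick (S.le_trans _ _ _ h hf)

theorem shift_ty {E : Type} {S : EffSig E} {M : Comp} {Γ : List (VTy E)} {φ : E}
    {B : CTy E} (A : VTy E) (h : CHasTy S Γ M φ B) : CHasTy S (A :: Γ) (shift M) φ B :=
  crename h (RenOK.succ _ _)

theorem shift1_ty {E : Type} {S : EffSig E} {M : Comp} {Γ : List (VTy E)} {φ : E}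
    {B : CTy E} {C : VTy E} (A : VTy E) (h : CHasTy S (C :: Γ) M φ B) :
    CHasTy S (C :: A :: Γ) (shift1 M) φ B :=
  crename h ((RenOK.succ _ _).lift _)

theorem bot_bot_le {E : Type} (S : EffSig E) : S.le (S.op S.bot S.bot) S.bot := by
  rw [S.bot_op]; exact S.le_refl _

/-- Type preservation of the CBV translation of the graded-monadic λ-calculus:
if `Γ ⊢_mon e : τ` then `⟦Γ⟧v ⊢ ⟦e⟧v :^⊥ F ⟦τ⟧v` in CBPV with effects. -/
theorem cbv_monadic_translation_preservation {E : Type} (S : EffSig E)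
    {Γ : List (MTy E)} {e : MTm} {τ : MTy E} (h : LamMon.HasTy S Γ e τ) :
    CHasTy S (Γ.map (tyTransV S)) (tmTransV e) S.bot (.F (tyTransV S τ)) := by
  have r := S.le_refl S.bot
  have b := bot_bot_le S
  induction h with
  | var h => exact .ret (.var (by simp [h])) r
  | lam _ ih => exact .ret (.thunk (.lam ih)) r
  | app _ _ ih₁ ih₂ =>
    exact .letin ih₁ (.letin (shift_ty _ ih₂) (.app (.force (.var rfl) r) (.var rfl)) b) b
  | unit => exact .ret .unit r
  | seq _ _ ih₁ ih₂ => exact .letin ih₁ (.seq (.var rfl) (shift_ty _ ih₂)) b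
  | wpair _ _ ih₁ ih₂ => exact .ret (.thunk (.cpair ih₁ ih₂)) r
  | fst _ ih => exact .letin ih (.fst (.force (.var rfl) r)) b
  | snd _ ih => exact .letin ih (.snd (.force (.var rfl) r)) b
  | inl _ ih => exact .letin ih (.ret (.inl (.var rfl)) r) b
  | inr _ ih => exact .letin ih (.ret (.inr (.var rfl)) r) b
  | case _ _ _ ih ih₁ ih₂ =>
    exact .letin ih (.case (.var rfl) (shift1_ty _ ih₁) (shift1_ty _ ih₂)) b
  | ret _ hφ ih => exact .ret (.thunk (csub ih hφ)) r
  | @bind Γ e₁ e₂ τ₁ τ₂ φ₁ φ₂ φ _ _ hφ ih₁ ih₂ =>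
    refine .letin ih₁ (.ret (.thunk (.letin (.force (.var rfl) (S.le_refl φ₁))
      (.letin (φ := φ₂) (shift1_ty _ ih₂) (.force (.var rfl) (S.le_refl φ₂)) ?_) hφ)) r) b
    rw [S.bot_op]; exact S.le_refl _
  | @tick Γ φ hφ =>
    refine .ret (.thunk (.letin (.tick hφ) (.ret (.var rfl) r) ?_)) r
    rw [S.op_bot]; exact S.le_refl _
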